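/- arXiv:0905.3827 — 3 statements merged into one kernel-verified Lean document; each statement's English description precedes it below -/
import Mathlib

section
/- Let (R,ν) be a filtered ring with a set of vertices P, and let (M,μ) be a filtered left R-module. If (m_i)_{i∈I}, with m_i ∈ p_{n_i}M for some p_{n_i} ∈ P, is a left P-μ-independent family, then the submodule Σ_{i∈I} R m_i of M is projective; indeed the natural epimorphism ⊕_{i∈I} R p_{n_i} → Σ_{i∈I} R m_i sending (r_i)_{i∈I} to Σ_{i∈I} r_i m_i is an isomorphism. -/
namespace LPA

variable {R : Type} [Ring R] {M : Type} [AddCommGroup M] [Module R M]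

/-- A filtration on a ring `R`: a degree function `ν : R → ℕ ∪ {-∞}`. -/
structure IsRingFiltration (ν : R → WithBot ℕ) : Prop where
  map_zero : ν 0 = ⊥
  nonneg : ∀ r : R, r ≠ 0 → 0 ≤ ν r
  sub_le : ∀ r s : R, ν (r - s) ≤ max (ν r) (ν s)
  mul_le : ∀ r s : R, ν (r * s) ≤ ν r + ν s
  map_one : ν 1 = 0

/-- A set of vertices in a filtered ring: a finite set of zero-degree, pairwise orthogonal
idempotents summing to `1`. -/
structure IsVertexSet (ν : R → WithBot ℕ) (P : Finset R) : Prop where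
  idem : ∀ p ∈ P, p * p = p
  deg_eq_zero : ∀ p ∈ P, ν p = 0
  orthogonal : ∀ p ∈ P, ∀ q ∈ P, p ≠ q → p * q = 0
  sum_eq_one : ∑ p ∈ P, p = 1

/-- A filtration on a module over a filtered ring. -/
structure IsModuleFiltration (ν : R → WithBot ℕ) (μ : M → WithBot ℕ) : Prop where
  map_zero : μ 0 = ⊥
  nonneg : ∀ m : M, m ≠ 0 → 0 ≤ μ m
  sub_le : ∀ m n : M, μ (m - n) ≤ max (μ m) (μ n)
  smul_le : ∀ (r : R) (m : M), μ (r • m) ≤ ν r + μ m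

/-- The family `(m i)`, with `m i ∈ (n i)•M`, is left `P`-`μ`-dependent: some `m i = 0`, or
there is a finitely supported family `(r i)` with `r i ∈ R·(n i)` such that the degree of
`∑ r i • m i` is strictly smaller than its formal degree `max (ν (r i) + μ (m i))`. -/
def DepFamily (ν : R → WithBot ℕ) (μ : M → WithBot ℕ) {I : Type} (n : I → R) (m : I → M) :
    Prop :=
  (∃ i, m i = 0) ∨ ∃ r : I →₀ R, (∀ i, r i * n i = r i) ∧
    μ (r.sum fun i ri => ri • m i) < r.support.sup fun i => ν (r i) + μ (m i)

/-- The element `x` is left `P`-`μ`-dependent on the family `(m i)`. -/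
def DepOn (ν : R → WithBot ℕ) (μ : M → WithBot ℕ) {I : Type} (n : I → R) (m : I → M)
    (x : M) : Prop :=
  x = 0 ∨ ∃ r : I →₀ R, (∀ i, r i * n i = r i) ∧
    μ (x - r.sum fun i ri => ri • m i) < μ x ∧ ∀ i, ν (r i) + μ (m i) ≤ μ x

/-- The element `x` is left `P`-`μ`-dependent on the set `S`. -/
def DepOnSet (ν : R → WithBot ℕ) (μ : M → WithBot ℕ) (P : Finset R) (S : Set M) (x : M) :
    Prop :=
  ∃ (I : Type) (n : I → R) (m : I → M), (∀ i, n i ∈ P) ∧ (∀ i, ∃ s ∈ S, m i = n i • s) ∧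
    DepOn ν μ n m x

/-- `M` satisfies the weak algorithm relative to `μ` and `P`: in every finite left
`P`-`μ`-dependent family with weakly increasing degrees, some member is left
`P`-`μ`-dependent on the preceding ones. -/
def WeakAlgorithm (ν : R → WithBot ℕ) (P : Finset R) (μ : M → WithBot ℕ) : Prop :=
  ∀ (ℓ : ℕ) (n : Fin ℓ → R) (m : Fin ℓ → M),
    (∀ i, n i ∈ P) → (∀ i, n i • m i = m i) →
    (∀ i j : Fin ℓ, i ≤ j → μ (m i) ≤ μ (m j)) →
    DepFamily ν μ n m →
    ∃ i : Fin ℓ, DepOn ν μ (fun j : {j : Fin ℓ // j < i} => n j.1)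
      (fun j : {j : Fin ℓ // j < i} => m j.1) (m i)

/-- A weak `P`-`μ`-basis for `M`. -/
def IsWeakBasis (ν : R → WithBot ℕ) (P : Finset R) (μ : M → WithBot ℕ) (B : Set M) : Prop :=
  (∀ b ∈ B, ∃ p ∈ P, ∃ m : M, b = p • m) ∧
  (∀ x : M, DepOnSet ν μ P B x) ∧
  (∀ b ∈ B, ¬ DepOnSet ν μ P (B \ {b}) b)

end LPA

open LPA in
/-- A left `P`-`μ`-independent family `(m i)`, with `m i ∈ (n i)•M` for vertices
`n i ∈ P`, generates a projective submodule `∑ R·(m i)`; indeed the natural epimorphism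
`⊕ R·(n i) → ∑ R·(m i)`, `(r i) ↦ ∑ r i • m i`, is an isomorphism (equivalently, injective). -/
theorem statement_1 {R M : Type} [Ring R] [AddCommGroup M] [Module R M]
    (ν : R → WithBot ℕ) (μ : M → WithBot ℕ) (P : Finset R)
    (hν : IsRingFiltration ν) (hP : IsVertexSet ν P) (hμ : IsModuleFiltration ν μ)
    {I : Type} (n : I → R) (m : I → M)
    (hn : ∀ i, n i ∈ P) (hm : ∀ i, n i • m i = m i)
    (hindep : ¬ DepFamily ν μ n m) :
    Module.Projective R ↥(Submodule.span R (Set.range m)) ∧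
      ∀ r : I →₀ R, (∀ i, r i * n i = r i) →
        (r.sum fun i ri => ri • m i) = 0 → r = 0 := by
  classical
  have key : ∀ r : I →₀ R, (∀ i, r i * n i = r i) →
        (r.sum fun i ri => ri • m i) = 0 → r = 0 := by
    intro r hr h0
    by_contra hne
    obtain ⟨i, hi⟩ := Finsupp.ne_iff.mp hne
    have hi0 : r i ≠ 0 := by simpa using hi
    apply hindep
    refine Or.inr ⟨r, hr, ?_⟩
    rw [h0, hμ.map_zero]
    have hmi : m i ≠ 0 := fun h => hindep (Or.inl ⟨i, h⟩)
    have h1 : (0 : WithBot ℕ) ≤ ν (r i) + μ (m i) :=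
      add_nonneg (hν.nonneg _ hi0) (hμ.nonneg _ hmi)
    have h2 : ν (r i) + μ (m i) ≤ r.support.sup fun i => ν (r i) + μ (m i) :=
      Finset.le_sup (f := fun i => ν (r i) + μ (m i)) (Finsupp.mem_support_iff.mpr hi0)
    exact lt_of_lt_of_le (WithBot.bot_lt_coe 0) (h1.trans h2)
  refine ⟨?_, key⟩
  let f : (I →₀ R) →ₗ[R] M := Finsupp.linearCombination R m
  let e : (I →₀ R) →ₗ[R] (I →₀ R) :=
    Finsupp.linearCombination R (fun i => Finsupp.single i (n i))
  have he : ∀ r i, e r i = r i * n i := by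
    intro r i
    induction r using Finsupp.induction_linear with
    | zero => simp
    | add a b ha hb => simp [ha, hb, add_mul]
    | single j a =>
      by_cases h : j = i
      · subst h; simp [e]
      · simp [e, Finsupp.single_apply, h]
  have hfe : f ∘ₗ e = f := by
    ext i
    simp [f, e, hm]
  have hker : LinearMap.ker f ≤ LinearMap.ker e := by
    intro r hr
    rw [LinearMap.mem_ker] at hr ⊢
    refine key (e r) (fun i => ?_) ?_
    · rw [he, mul_assoc, hP.idem _ (hn i)]
    · have : f (e r) = 0 := by rw [← LinearMap.comp_apply, hfe, hr]
      simpa [f, Finsupp.linearCombination_apply] using this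
  rw [← Finsupp.range_linearCombination]
  change Module.Projective R (LinearMap.range f)
  let s : LinearMap.range f →ₗ[R] (I →₀ R) :=
    (LinearMap.ker f).liftQ e hker ∘ₗ f.quotKerEquivRange.symm.toLinearMap
  refine Module.Projective.of_split s f.rangeRestrict ?_
  ext ⟨x, r, rfl⟩
  have h1 : f.quotKerEquivRange.symm ⟨f r, r, rfl⟩ = (LinearMap.ker f).mkQ r :=
    LinearMap.quotKerEquivRange_symm_apply_image f r _
  have h2 : s ⟨f r, r, rfl⟩ = e r := by
    simp [s, h1]
  rw [LinearMap.comp_apply, h2]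
  exact LinearMap.congr_fun hfe r
end

section
/- Let E be a finite quiver with vertex set {1,…,d} and let M be a free left P_k(E)-module freely generated by a set B. Given any map μ: B → ℕ, extend μ to M as the formal degree: for m = Σ_{b∈B} r_b b (unique expression), μ(m) = max_b(ν(r_b)+μ(b)), where ν is the path-length degree on P_k(E). Then (M,μ) is a filtered P_k(E)-module and M satisfies the weak algorithm relative to μ and the set of vertices P = {p_1,…,p_d}. -/
namespace LPA

/-- A finite quiver: finite sets of vertices and arrows with source and target maps. -/
structure FinQuiver : Type 1 where
  V : Type
  A : Type
  [fintypeV : Fintype V]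
  [decEqV : DecidableEq V]
  [fintypeA : Fintype A]
  [decEqA : DecidableEq A]
  src : A → V
  tgt : A → V

attribute [instance] FinQuiver.fintypeV FinQuiver.decEqV FinQuiver.fintypeA FinQuiver.decEqA

/-- The inverse quiver: all arrows reversed. -/
def FinQuiver.rev (Q : FinQuiver) : FinQuiver where
  V := Q.V
  A := Q.A
  fintypeV := Q.fintypeV
  decEqV := Q.decEqV
  fintypeA := Q.fintypeA
  decEqA := Q.decEqA
  src := Q.tgt
  tgt := Q.src

/-- Generators of the path algebra: a trivial path `p v` for each vertex and an arrow `e` for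
each arrow. -/
inductive PathGen (Q : FinQuiver) : Type
  | vertex (v : Q.V) : PathGen Q
  | edge (e : Q.A) : PathGen Q

/-- Defining relations of the path algebra: the trivial paths are pairwise orthogonal
idempotents summing to `1`, and `p (src e) * e = e = e * p (tgt e)`. -/
inductive PathRel (k : Type) [CommRing k] (Q : FinQuiver) :
    FreeAlgebra k (PathGen Q) → FreeAlgebra k (PathGen Q) → Prop
  | vertex_mul_self (v : Q.V) :
      PathRel k Q (FreeAlgebra.ι k (PathGen.vertex v) * FreeAlgebra.ι k (PathGen.vertex v))
        (FreeAlgebra.ι k (PathGen.vertex v))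
  | vertex_mul_ne (v w : Q.V) (h : v ≠ w) :
      PathRel k Q (FreeAlgebra.ι k (PathGen.vertex v) * FreeAlgebra.ι k (PathGen.vertex w)) 0
  | sum_vertex :
      PathRel k Q (∑ v : Q.V, FreeAlgebra.ι k (PathGen.vertex v)) 1
  | src_mul (e : Q.A) :
      PathRel k Q
        (FreeAlgebra.ι k (PathGen.vertex (Q.src e)) * FreeAlgebra.ι k (PathGen.edge e))
        (FreeAlgebra.ι k (PathGen.edge e))
  | mul_tgt (e : Q.A) :
      PathRel k Q
        (FreeAlgebra.ι k (PathGen.edge e) * FreeAlgebra.ι k (PathGen.vertex (Q.tgt e)))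
        (FreeAlgebra.ι k (PathGen.edge e))

/-- The path algebra `P_k(Q)` of a finite quiver `Q`, presented by generators and relations. -/
def PathAlg (k : Type) [CommRing k] (Q : FinQuiver) : Type :=
  RingQuot (PathRel k Q)

variable (k : Type) [CommRing k] (Q : FinQuiver)

noncomputable instance : Ring (PathAlg k Q) :=
  inferInstanceAs (Ring (RingQuot (PathRel k Q)))

noncomputable instance : Algebra k (PathAlg k Q) :=
  inferInstanceAs (Algebra k (RingQuot (PathRel k Q)))

/-- The quotient map from the free algebra onto the path algebra. -/
noncomputable def PathAlg.mk : FreeAlgebra k (PathGen Q) →ₐ[k] PathAlg k Q :=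
  RingQuot.mkAlgHom k (PathRel k Q)

/-- The trivial path (vertex idempotent) `p v` in the path algebra. -/
noncomputable def PathAlg.p (v : Q.V) : PathAlg k Q :=
  PathAlg.mk k Q (FreeAlgebra.ι k (PathGen.vertex v))

/-- The arrow `e` in the path algebra. -/
noncomputable def PathAlg.arrow (e : Q.A) : PathAlg k Q :=
  PathAlg.mk k Q (FreeAlgebra.ι k (PathGen.edge e))

theorem PathAlg.mk_rel {x y : FreeAlgebra k (PathGen Q)} (h : PathRel k Q x y) :
    PathAlg.mk k Q x = PathAlg.mk k Q y :=
  RingQuot.mkAlgHom_rel k h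

theorem PathAlg.p_mul_self (v : Q.V) : PathAlg.p k Q v * PathAlg.p k Q v = PathAlg.p k Q v := by
  have h := PathAlg.mk_rel k Q (PathRel.vertex_mul_self v)
  simpa [map_mul, PathAlg.p] using h

theorem PathAlg.p_mul_ne (v w : Q.V) (hvw : v ≠ w) :
    PathAlg.p k Q v * PathAlg.p k Q w = 0 := by
  have h := PathAlg.mk_rel k Q (PathRel.vertex_mul_ne v w hvw)
  simpa [map_mul, PathAlg.p] using h

theorem PathAlg.sum_p : (∑ v : Q.V, PathAlg.p k Q v) = 1 := by
  have h := PathAlg.mk_rel k Q (PathRel.sum_vertex)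
  simpa [map_sum, PathAlg.p] using h

theorem PathAlg.arrow_mul_tgt (e : Q.A) :
    PathAlg.arrow k Q e * PathAlg.p k Q (Q.tgt e) = PathAlg.arrow k Q e := by
  have h := PathAlg.mk_rel k Q (PathRel.mul_tgt e)
  simpa [map_mul, PathAlg.p, PathAlg.arrow] using h

theorem PathAlg.src_mul_arrow (e : Q.A) :
    PathAlg.p k Q (Q.src e) * PathAlg.arrow k Q e = PathAlg.arrow k Q e := by
  have h := PathAlg.mk_rel k Q (PathRel.src_mul e)
  simpa [map_mul, PathAlg.p, PathAlg.arrow] using h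

/-- The set of vertices `{p v | v ∈ Q.V}` of the path algebra, as a finite set. -/
noncomputable def vertexFinset : Finset (PathAlg k Q) :=
  letI := Classical.decEq (PathAlg k Q)
  Finset.univ.image (PathAlg.p k Q)

end LPA

namespace LPA

variable (k : Type) [CommRing k] (Q : FinQuiver)

/-- The image in the path algebra of a word in the generators. -/
noncomputable def pathOfWord (w : FreeMonoid (PathGen Q)) : PathAlg k Q :=
  PathAlg.mk k Q (FreeMonoid.lift (FreeAlgebra.ι k) w)

/-- The number of edge-letters in a word in the generators. -/
def edgeCount (w : FreeMonoid (PathGen Q)) : ℕ :=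
  (FreeMonoid.toList w).countP fun g =>
    match g with
    | PathGen.edge _ => true
    | PathGen.vertex _ => false

/-- The `k`-span of the images of all words with at most `n` edge-letters: the elements of
degree at most `n` in the path algebra. -/
noncomputable def wordSpan (n : ℕ) : Submodule k (PathAlg k Q) :=
  Submodule.span k (pathOfWord k Q '' {w | edgeCount Q w ≤ n})

open Classical in
/-- The path-length degree function on the path algebra: `pdeg x` is the smallest `n` such
that `x` is a `k`-linear combination of paths of length at most `n` (i.e. the maximal length
of a path in the support of `x`), and `pdeg 0 = ⊥ = -∞`. -/
noncomputable def pdeg (x : PathAlg k Q) : WithBot ℕ :=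
  if x = 0 then ⊥ else ↑(sInf {n : ℕ | x ∈ wordSpan k Q n})

end LPA

namespace LPA

section helpers

variable {k : Type} [Field k] {Q : FinQuiver}

theorem wb_cast (a : ℕ) : (WithBot.some a : WithBot ℕ) = (a : WithBot ℕ) := rfl

/-! ### Lifting out of the path algebra -/

theorem PathAlg.exists_lift {S : Type} [Ring S] [Algebra k S] (f : PathGen Q → S)
    (h1 : ∀ v, f (.vertex v) * f (.vertex v) = f (.vertex v))
    (h2 : ∀ v w, v ≠ w → f (.vertex v) * f (.vertex w) = 0)
    (h3 : ∑ v, f (.vertex v) = 1)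
    (h4 : ∀ e, f (.vertex (Q.src e)) * f (.edge e) = f (.edge e))
    (h5 : ∀ e, f (.edge e) * f (.vertex (Q.tgt e)) = f (.edge e)) :
    ∃ F : PathAlg k Q →ₐ[k] S, (∀ v, F (PathAlg.p k Q v) = f (.vertex v)) ∧
      ∀ e, F (PathAlg.arrow k Q e) = f (.edge e) := by
  have hrel : ∀ ⦃x y⦄, PathRel k Q x y → FreeAlgebra.lift k f x = FreeAlgebra.lift k f y := by
    intro x y h
    induction h with
    | vertex_mul_self v => simpa using h1 v
    | vertex_mul_ne v w h => simpa using h2 v w h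
    | sum_vertex => simpa using h3
    | src_mul e => simpa using h4 e
    | mul_tgt e => simpa using h5 e
  let F : RingQuot (PathRel k Q) →ₐ[k] S := RingQuot.liftAlgHom k ⟨FreeAlgebra.lift k f, hrel⟩
  have hF : ∀ x, F (RingQuot.mkAlgHom k (PathRel k Q) x) = FreeAlgebra.lift k f x := by
    intro x; exact RingQuot.liftAlgHom_mkAlgHom_apply k _ hrel x
  refine ⟨F, fun v => ?_, fun e => ?_⟩
  · refine (hF _).trans ?_; simp
  · refine (hF _).trans ?_; simp

theorem exists_chi (v : Q.V) : ∃ F : PathAlg k Q →ₐ[k] k,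
    (∀ w, F (PathAlg.p k Q w) = if w = v then 1 else 0) ∧
      ∀ e, F (PathAlg.arrow k Q e) = 0 := by
  let f : PathGen Q → k := fun g => match g with
    | .vertex w => if w = v then 1 else 0
    | .edge _ => 0
  refine PathAlg.exists_lift f ?_ ?_ ?_ ?_ ?_
  · intro w; simp [f]
  · intro w w' h; simp only [f]; split_ifs <;> simp_all
  · simp [f]
  · intro e; simp [f]
  · intro e; simp [f]

/-- The augmentation character at a vertex. -/
noncomputable def chi (v : Q.V) : PathAlg k Q →ₐ[k] k := (exists_chi v).choose

theorem chi_p (v w : Q.V) : chi v (PathAlg.p k Q w) = if w = v then 1 else 0 :=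
  (exists_chi v).choose_spec.1 w

theorem chi_arrow (v : Q.V) (e : Q.A) : chi v (PathAlg.arrow k Q e) = 0 :=
  (exists_chi v).choose_spec.2 e

theorem exists_star (e : Q.A) : ∃ T : PathAlg k Q →ₗ[k] PathAlg k Q,
    (∀ v, T (PathAlg.p k Q v) = 0) ∧
    (∀ f, T (PathAlg.arrow k Q f) = if f = e then PathAlg.p k Q (Q.tgt e) else 0) ∧
    (∀ x y, T (x * y) = T x * y + chi (Q.src e) x • T y) := by
  let f : PathGen Q → Matrix (Fin 2) (Fin 2) (PathAlg k Q) := fun g => match g with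
    | .vertex w => !![if w = Q.src e then 1 else 0, 0; 0, PathAlg.p k Q w]
    | .edge g => !![0, if g = e then PathAlg.p k Q (Q.tgt e) else 0; 0, PathAlg.arrow k Q g]
  obtain ⟨F, hF1, hF2⟩ := PathAlg.exists_lift (k := k) f (by
      intro v
      simp only [f]
      ext i j
      by_cases h : v = Q.src e <;> fin_cases i <;> fin_cases j <;>
        simp [h, PathAlg.p_mul_self]) (by
      intro v w h
      simp only [f]
      ext i j
      have hvw := PathAlg.p_mul_ne k Q v w h
      by_cases h1 : v = Q.src e <;> by_cases h2 : w = Q.src e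
      · exact absurd (h1.trans h2.symm) h
      all_goals fin_cases i <;> fin_cases j <;> simp [h1, h2] <;> simp_all) (by
      ext i j
      rw [Matrix.sum_apply]
      fin_cases i <;> fin_cases j <;> simp [f, PathAlg.sum_p]) (by
      intro g
      simp only [f]
      ext i j
      by_cases h : g = e
      · subst h
        fin_cases i <;> fin_cases j <;> simp [PathAlg.src_mul_arrow]
      · by_cases h' : Q.src g = Q.src e <;> fin_cases i <;> fin_cases j <;>
          simp [PathAlg.src_mul_arrow, h, h']
        rw [← h', PathAlg.src_mul_arrow]) (by
      intro g
      simp only [f]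
      ext i j
      by_cases h : g = e
      · subst h
        fin_cases i <;> fin_cases j <;> simp [PathAlg.arrow_mul_tgt, PathAlg.p_mul_self]
      · fin_cases i <;> fin_cases j <;> simp [PathAlg.arrow_mul_tgt, h])
  have key : ∀ x : PathAlg k Q, F x 0 0 = algebraMap k _ (chi (Q.src e) x) ∧ F x 1 0 = 0 ∧
      F x 1 1 = x := by
    intro x
    obtain ⟨y, rfl⟩ : ∃ y, PathAlg.mk k Q y = x := RingQuot.mkAlgHom_surjective k _ x
    induction y using FreeAlgebra.induction with
    | grade0 c => 
      have : PathAlg.mk k Q (algebraMap k _ c) = algebraMap k _ c := AlgHom.commutes _ _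
      rw [this, AlgHom.commutes, AlgHom.commutes]
      simp [Matrix.algebraMap_matrix_apply]
    | grade1 g =>
      cases g with
      | vertex v =>
        change F (PathAlg.p k Q v) 0 0 = algebraMap k _ (chi _ (PathAlg.p k Q v)) ∧ F (PathAlg.p k Q v) 1 0 = 0 ∧ F (PathAlg.p k Q v) 1 1 = PathAlg.p k Q v
        rw [hF1, chi_p]
        simp only [f]
        split_ifs <;> simp
      | edge v =>
        change F (PathAlg.arrow k Q v) 0 0 = algebraMap k _ (chi _ (PathAlg.arrow k Q v)) ∧ F (PathAlg.arrow k Q v) 1 0 = 0 ∧ F (PathAlg.arrow k Q v) 1 1 = PathAlg.arrow k Q v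
        rw [hF2, chi_arrow]
        simp [f]
    | mul a b ha hb =>
      simp only [map_mul, Matrix.mul_apply, Fin.sum_univ_two, ha, hb]
      simp
    | add a b ha hb =>
      simp only [map_add, Matrix.add_apply, ha, hb]
      simp
  refine ⟨{ toFun := fun x => F x 0 1, map_add' := by simp, map_smul' := by simp }, ?_, ?_, ?_⟩
  · intro v; simp [hF1, f]
  · intro g; simp [hF2, f]
  · intro x y
    simp only [LinearMap.coe_mk, AddHom.coe_mk, map_mul, Matrix.mul_apply, Fin.sum_univ_two,
      key, Algebra.smul_def]
    rw [add_comm]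

/-- Left transduction by an arrow: removes the first arrow `e`. -/
noncomputable def star (e : Q.A) : PathAlg k Q →ₗ[k] PathAlg k Q := (exists_star e).choose

theorem star_p (e : Q.A) (v : Q.V) : star e (PathAlg.p k Q v) = 0 :=
  (exists_star e).choose_spec.1 v

theorem star_arrow (e f : Q.A) :
    star e (PathAlg.arrow k Q f) = if f = e then PathAlg.p k Q (Q.tgt e) else 0 :=
  (exists_star e).choose_spec.2.1 f

theorem star_mul (e : Q.A) (x y : PathAlg k Q) :
    star e (x * y) = star e x * y + chi (Q.src e) x • star e y :=
  (exists_star e).choose_spec.2.2 x y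

theorem star_one (e : Q.A) : star e (1 : PathAlg k Q) = 0 := by
  rw [← PathAlg.sum_p, map_sum]; simp [star_p]

/-! ### Words and degree -/

theorem pathOfWord_one : pathOfWord k Q 1 = 1 := by simp [pathOfWord]

theorem pathOfWord_mul (a b) : pathOfWord k Q (a * b) = pathOfWord k Q a * pathOfWord k Q b := by
  simp [pathOfWord]

theorem pathOfWord_vertex (v) :
    pathOfWord k Q (FreeMonoid.of (.vertex v)) = PathAlg.p k Q v := by
  simp [pathOfWord, PathAlg.p]

theorem pathOfWord_edge (v) :
    pathOfWord k Q (FreeMonoid.of (.edge v)) = PathAlg.arrow k Q v := by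
  simp [pathOfWord, PathAlg.arrow]

theorem edgeCount_mul (a b) : edgeCount Q (a * b) = edgeCount Q a + edgeCount Q b := by
  simp [edgeCount]

theorem edgeCount_one : edgeCount Q 1 = 0 := by simp [edgeCount]

theorem edgeCount_vertex (v) : edgeCount Q (FreeMonoid.of (.vertex v)) = 0 := by
  simp [edgeCount]

theorem edgeCount_edge (v) : edgeCount Q (FreeMonoid.of (.edge v)) = 1 := by
  simp [edgeCount]

theorem word_mem {n : ℕ} (w) (h : edgeCount Q w ≤ n) : pathOfWord k Q w ∈ wordSpan k Q n :=
  Submodule.subset_span ⟨w, h, rfl⟩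

theorem wordSpan_mono {m n : ℕ} (h : m ≤ n) : wordSpan k Q m ≤ wordSpan k Q n :=
  Submodule.span_mono (Set.image_mono fun _ hw => le_trans hw h)

theorem wordSpan_mul {m n : ℕ} {x y : PathAlg k Q} (hx : x ∈ wordSpan k Q m)
    (hy : y ∈ wordSpan k Q n) : x * y ∈ wordSpan k Q (m + n) := by
  have := Submodule.mul_mem_mul hx hy
  rw [wordSpan, wordSpan, Submodule.span_mul_span] at this
  refine Submodule.span_le.2 ?_ this
  rintro _ ⟨_, ⟨a, ha, rfl⟩, _, ⟨b, hb, rfl⟩, rfl⟩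
  simp only [Set.mem_ofPred_eq] at ha hb
  simp only [← pathOfWord_mul]
  exact word_mem _ (by rw [edgeCount_mul]; omega)

theorem p_mem (v) : PathAlg.p k Q v ∈ wordSpan k Q 0 := by
  rw [← pathOfWord_vertex]; exact word_mem _ (by rw [edgeCount_vertex])

theorem arrow_mem (v) : PathAlg.arrow k Q v ∈ wordSpan k Q 1 := by
  rw [← pathOfWord_edge]; exact word_mem _ (by rw [edgeCount_edge])

theorem one_mem : (1 : PathAlg k Q) ∈ wordSpan k Q 0 := by
  rw [← pathOfWord_one]; exact word_mem _ (by rw [edgeCount_one])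

theorem exists_mem (x : PathAlg k Q) : ∃ n, x ∈ wordSpan k Q n := by
  obtain ⟨y, rfl⟩ : ∃ y, PathAlg.mk k Q y = x := RingQuot.mkAlgHom_surjective k _ x
  induction y using FreeAlgebra.induction with
  | grade0 c =>
    refine ⟨0, ?_⟩
    have : PathAlg.mk k Q (algebraMap k _ c) = algebraMap k _ c := AlgHom.commutes _ _
    rw [this, Algebra.algebraMap_eq_smul_one]
    exact Submodule.smul_mem _ _ one_mem
  | grade1 g =>
    cases g with
    | vertex v => exact ⟨0, p_mem v⟩
    | edge e => exact ⟨1, arrow_mem e⟩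
  | mul a b ha hb =>
    obtain ⟨m, hm⟩ := ha
    obtain ⟨n, hn⟩ := hb
    exact ⟨m + n, by rw [map_mul]; exact wordSpan_mul hm hn⟩
  | add a b ha hb =>
    obtain ⟨m, hm⟩ := ha
    obtain ⟨n, hn⟩ := hb
    refine ⟨m + n, ?_⟩
    rw [map_add]
    exact Submodule.add_mem _ (wordSpan_mono (by omega) hm) (wordSpan_mono (by omega) hn)

theorem pdeg_zero : pdeg k Q 0 = ⊥ := by simp [pdeg]

theorem pdeg_eq_bot {x : PathAlg k Q} : pdeg k Q x = ⊥ ↔ x = 0 := by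
  unfold pdeg; split_ifs with h <;> simp [h]

theorem pdeg_le_iff {x : PathAlg k Q} {n : ℕ} :
    pdeg k Q x ≤ (n : WithBot ℕ) ↔ x ∈ wordSpan k Q n := by
  unfold pdeg; split_ifs with h
  · simp [h]
  · have hne : {n : ℕ | x ∈ wordSpan k Q n}.Nonempty := exists_mem x
    rw [Nat.cast_le]
    constructor
    · intro hn; exact wordSpan_mono hn (Nat.sInf_mem hne)
    · intro hn; exact Nat.sInf_le hn

theorem pdeg_mem {x : PathAlg k Q} {n : ℕ} (h : pdeg k Q x = n) : x ∈ wordSpan k Q n :=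
  pdeg_le_iff.1 h.le

theorem pdeg_add_le {x y : PathAlg k Q} {z : WithBot ℕ} (hx : pdeg k Q x ≤ z)
    (hy : pdeg k Q y ≤ z) : pdeg k Q (x + y) ≤ z := by
  induction z using WithBot.recBotCoe with
  | bot =>
    rw [le_bot_iff, pdeg_eq_bot] at *
    simp [hx, hy]
  | coe n => 
    exact pdeg_le_iff.2 (Submodule.add_mem _ (pdeg_le_iff.1 hx) (pdeg_le_iff.1 hy))

theorem pdeg_smul_le (c : k) (x : PathAlg k Q) : pdeg k Q (c • x) ≤ pdeg k Q x := by
  generalize hz : pdeg k Q x = z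
  induction z using WithBot.recBotCoe with
  | bot => rw [pdeg_eq_bot] at hz; simp [hz, pdeg_zero]
  | coe n => exact pdeg_le_iff.2 (Submodule.smul_mem _ _ (pdeg_le_iff.1 hz.le))

theorem pdeg_mul_le (x y : PathAlg k Q) : pdeg k Q (x * y) ≤ pdeg k Q x + pdeg k Q y := by
  generalize hz : pdeg k Q x = z
  generalize hw : pdeg k Q y = w
  induction z using WithBot.recBotCoe with
  | bot => rw [pdeg_eq_bot] at hz; simp [hz, pdeg_zero]
  | coe n =>
    induction w using WithBot.recBotCoe with
    | bot => rw [pdeg_eq_bot] at hw; simp [hw, pdeg_zero]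
    | coe m =>
      rw [← WithBot.coe_add]
      exact pdeg_le_iff.2 (wordSpan_mul (pdeg_le_iff.1 hz.le) (pdeg_le_iff.1 hw.le))

theorem pdeg_sum_le {ι : Type} (s : Finset ι) (f : ι → PathAlg k Q) {z : WithBot ℕ}
    (h : ∀ i ∈ s, pdeg k Q (f i) ≤ z) : pdeg k Q (∑ i ∈ s, f i) ≤ z := by
  classical
  induction s using Finset.induction_on with
  | empty => simp [pdeg_zero]
  | insert a s ha ih =>
    rw [Finset.sum_insert ha]
    exact pdeg_add_le (h a (by simp)) (ih fun i hi => h i (by simp [hi]))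

theorem star_word (e : Q.A) (w : FreeMonoid (PathGen Q)) :
    pdeg k Q (star e (pathOfWord k Q w)) + 1 ≤ (edgeCount Q w : WithBot ℕ) := by
  induction w using FreeMonoid.inductionOn' with
  | one => simp [pathOfWord_one, star_one, pdeg_zero]
  | of_mul g w ih =>
    rw [pathOfWord_mul, edgeCount_mul, star_mul]
    cases g with
    | vertex v =>
      rw [pathOfWord_vertex, edgeCount_vertex, star_p, zero_mul, zero_add, zero_add]
      exact (add_le_add_left (pdeg_smul_le _ _) _).trans ih
    | edge f =>
      rw [pathOfWord_edge, edgeCount_edge, star_arrow, chi_arrow, zero_smul, add_zero]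
      rw [add_comm 1, Nat.cast_add, Nat.cast_one]
      refine add_le_add_left ?_ _
      refine pdeg_le_iff.2 ?_
      split_ifs
      · have := wordSpan_mul (p_mem (k := k) (Q.tgt e)) (word_mem (k := k) w le_rfl)
        rwa [zero_add] at this
      · simp

theorem star_deg (e : Q.A) (x : PathAlg k Q) : pdeg k Q (star e x) + 1 ≤ pdeg k Q x := by
  generalize hz : pdeg k Q x = z
  induction z using WithBot.recBotCoe with
  | bot => rw [pdeg_eq_bot] at hz; simp [hz, pdeg_zero]
  | coe n =>
    have hx := pdeg_le_iff.1 hz.le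
    clear hz
    induction hx using Submodule.span_induction with
    | mem x h =>
      obtain ⟨w, hw, rfl⟩ := h
      exact (star_word e w).trans (Nat.cast_le.2 hw)
    | zero => simp [pdeg_zero]
    | add x y _ _ hx hy =>
      rw [map_add]
      have : pdeg k Q (star e x + star e y) ≤ max (pdeg k Q (star e x)) (pdeg k Q (star e y)) :=
        pdeg_add_le (le_max_left _ _) (le_max_right _ _)
      rcases le_total (pdeg k Q (star e x)) (pdeg k Q (star e y)) with h | h
      · rw [max_eq_right h] at this; exact (add_le_add_left this _).trans hy
      · rw [max_eq_left h] at this; exact (add_le_add_left this _).trans hx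
    | smul c x _ hx =>
      rw [map_smul]
      exact (add_le_add_left (pdeg_smul_le _ _) _).trans hx

theorem decomp (x : PathAlg k Q) :
    x = ∑ v, chi v x • PathAlg.p k Q v + ∑ e, PathAlg.arrow k Q e * star e x := by
  obtain ⟨n, hn⟩ := exists_mem x
  induction hn using Submodule.span_induction with
  | zero => simp
  | add x y _ _ hx hy =>
    conv_lhs => rw [hx, hy]
    simp only [map_add, add_smul, mul_add, Finset.sum_add_distrib]
    abel
  | smul c x _ hx =>
    conv_lhs => rw [hx]
    simp [Finset.smul_sum, smul_smul]
  | mem x h =>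
    obtain ⟨w, -, rfl⟩ := h
    induction w using FreeMonoid.inductionOn' with
    | one => simp [pathOfWord_one, star_one, PathAlg.sum_p]
    | of_mul g w ih =>
      rw [pathOfWord_mul]
      cases g with
      | vertex v =>
        rw [pathOfWord_vertex]
        conv_lhs => rw [ih]
        rw [mul_add, Finset.mul_sum, Finset.mul_sum]
        congr 1
        · refine Finset.sum_congr rfl fun u _ => ?_
          rw [map_mul, chi_p]
          by_cases h : v = u
          · subst h; simp [PathAlg.p_mul_self]
          · simp [h, PathAlg.p_mul_ne k Q v u h]
        · refine Finset.sum_congr rfl fun e _ => ?_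
          rw [star_mul, star_p, chi_p, zero_mul, zero_add, ← mul_assoc]
          by_cases h : v = Q.src e
          · subst h; simp [PathAlg.src_mul_arrow]
          · rw [← PathAlg.src_mul_arrow, ← mul_assoc, PathAlg.p_mul_ne k Q _ _ h]
            simp [h]
      | edge f =>
        rw [pathOfWord_edge]
        simp only [map_mul, chi_arrow, star_mul, star_arrow]
        simp [← mul_assoc, PathAlg.arrow_mul_tgt]

theorem pdeg_le_of_star {x : PathAlg k Q} {n : ℕ}
    (h : ∀ e, pdeg k Q (star e x) < (n : WithBot ℕ)) : pdeg k Q x ≤ (n : WithBot ℕ) := by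
  rw [decomp x]
  refine pdeg_add_le (pdeg_sum_le _ _ fun v _ => ?_) (pdeg_sum_le _ _ fun e _ => ?_)
  · refine (pdeg_smul_le _ _).trans (pdeg_le_iff.2 (wordSpan_mono (Nat.zero_le n) (p_mem v)))
  · refine (pdeg_mul_le _ _).trans ?_
    have h1 : pdeg k Q (PathAlg.arrow k Q e) ≤ ((1 : ℕ) : WithBot ℕ) := pdeg_le_iff.2 (arrow_mem e)
    refine (add_le_add_left h1 _).trans ?_
    have := h e
    generalize pdeg k Q (star e x) = z at this
    induction z using WithBot.recBotCoe with
    | bot => simp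
    | coe a =>
      rw [wb_cast] at *
      have : a < n := by exact_mod_cast this
      rw [← Nat.cast_add, Nat.cast_le]; omega

/-! ### The formal degree on a free module -/

variable {B : Type}

/-- The formal degree. -/
noncomputable def fdeg (μ₀ : B → ℕ) (m : B →₀ PathAlg k Q) : WithBot ℕ :=
  m.support.sup fun b => pdeg k Q (m b) + (μ₀ b : WithBot ℕ)

variable {μ₀ : B → ℕ}

theorem fdeg_le_iff {m : B →₀ PathAlg k Q} {z : WithBot ℕ} :
    fdeg μ₀ m ≤ z ↔ ∀ b, pdeg k Q (m b) + (μ₀ b : WithBot ℕ) ≤ z := by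
  unfold fdeg
  rw [Finset.sup_le_iff]
  refine ⟨fun h b => ?_, fun h b _ => h b⟩
  by_cases hb : m b = 0
  · simp [hb, pdeg_zero]
  · exact h b (by simpa using hb)

theorem le_fdeg (m : B →₀ PathAlg k Q) (b : B) :
    pdeg k Q (m b) + (μ₀ b : WithBot ℕ) ≤ fdeg μ₀ m := fdeg_le_iff.1 le_rfl b

theorem fdeg_zero : fdeg μ₀ (0 : B →₀ PathAlg k Q) = ⊥ := by simp [fdeg]

theorem fdeg_smul_le (r : PathAlg k Q) (m : B →₀ PathAlg k Q) :
    fdeg μ₀ (r • m) ≤ pdeg k Q r + fdeg μ₀ m := by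
  refine fdeg_le_iff.2 fun b => ?_
  rw [Finsupp.smul_apply, smul_eq_mul]
  refine (add_le_add_left (pdeg_mul_le _ _) _).trans ?_
  rw [add_assoc]
  exact add_le_add_right (le_fdeg m b) _

theorem fdeg_ksmul_le (c : k) (m : B →₀ PathAlg k Q) : fdeg μ₀ (c • m) ≤ fdeg μ₀ m := by
  refine fdeg_le_iff.2 fun b => ?_
  rw [Finsupp.smul_apply]
  exact (add_le_add_left (pdeg_smul_le _ _) _).trans (le_fdeg m b)

theorem fdeg_add_le (m n : B →₀ PathAlg k Q) :
    fdeg μ₀ (m + n) ≤ max (fdeg μ₀ m) (fdeg μ₀ n) := by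
  refine fdeg_le_iff.2 fun b => ?_
  rw [Finsupp.add_apply]
  have : pdeg k Q (m b + n b) ≤ max (pdeg k Q (m b)) (pdeg k Q (n b)) :=
    pdeg_add_le (le_max_left _ _) (le_max_right _ _)
  rcases le_total (pdeg k Q (m b)) (pdeg k Q (n b)) with h | h
  · rw [max_eq_right h] at this
    exact (add_le_add_left this _).trans ((le_fdeg n b).trans (le_max_right _ _))
  · rw [max_eq_left h] at this
    exact (add_le_add_left this _).trans ((le_fdeg m b).trans (le_max_left _ _))

theorem fdeg_neg_le (m : B →₀ PathAlg k Q) : fdeg μ₀ (-m) ≤ fdeg μ₀ m := by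
  have := fdeg_ksmul_le (μ₀ := μ₀) (-1 : k) m
  rwa [neg_smul, one_smul] at this

theorem fdeg_sub_le (m n : B →₀ PathAlg k Q) :
    fdeg μ₀ (m - n) ≤ max (fdeg μ₀ m) (fdeg μ₀ n) := by
  rw [sub_eq_add_neg]
  exact (fdeg_add_le _ _).trans (max_le_max le_rfl (fdeg_neg_le n))

theorem fdeg_sub_lt {m n : B →₀ PathAlg k Q} {z : WithBot ℕ} (hm : fdeg μ₀ m < z)
    (hn : fdeg μ₀ n < z) : fdeg μ₀ (m - n) < z :=
  (fdeg_sub_le m n).trans_lt (max_lt hm hn)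

theorem fdeg_sum_lt {ι : Type} (s : Finset ι) (f : ι → B →₀ PathAlg k Q) {z : WithBot ℕ}
    (hz : ⊥ < z) (h : ∀ i ∈ s, fdeg μ₀ (f i) < z) : fdeg μ₀ (∑ i ∈ s, f i) < z := by
  classical
  induction s using Finset.induction_on with
  | empty => simpa [fdeg_zero] using hz
  | insert a s ha ih =>
    rw [Finset.sum_insert ha]
    exact (fdeg_add_le _ _).trans_lt
      (max_lt (h a (by simp)) (ih fun i hi => h i (by simp [hi])))

/-- Transduction on the free module. -/
noncomputable def starM (e : Q.A) : (B →₀ PathAlg k Q) →ₗ[k] (B →₀ PathAlg k Q) :=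
  Finsupp.mapRange.linearMap (star e)

theorem starM_apply (e : Q.A) (m : B →₀ PathAlg k Q) (b : B) : starM e m b = star e (m b) := by
  simp [starM]

theorem starM_smul (e : Q.A) (r : PathAlg k Q) (m : B →₀ PathAlg k Q) :
    starM e (r • m) = star e r • m + chi (Q.src e) r • starM e m := by
  ext b
  simp [starM_apply, star_mul]

theorem starM_deg (e : Q.A) (m : B →₀ PathAlg k Q) : fdeg μ₀ (starM e m) + 1 ≤ fdeg μ₀ m := by
  have key : ∀ b, pdeg k Q (starM e m b) + (μ₀ b : WithBot ℕ) + 1 ≤ fdeg μ₀ m := by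
    intro b
    rw [starM_apply, add_right_comm]
    exact (add_le_add_left (star_deg e (m b)) _).trans (le_fdeg m b)
  generalize fdeg μ₀ m = z at key
  induction z using WithBot.recBotCoe with
  | bot =>
    have : fdeg μ₀ (starM e m) ≤ ⊥ := fdeg_le_iff.2 fun b => by simpa using key b
    rw [le_bot_iff] at this
    simp [this]
  | coe n =>
    cases n with
    | zero =>
      have : fdeg μ₀ (starM e m) ≤ ⊥ := fdeg_le_iff.2 fun b => by
        have := key b
        generalize pdeg k Q (starM e m b) + (μ₀ b : WithBot ℕ) = y at this
        induction y using WithBot.recBotCoe with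
        | bot => simp
        | coe a => exfalso; norm_cast at this
      rw [le_bot_iff] at this
      simp [this]
    | succ n =>
      have : fdeg μ₀ (starM e m) ≤ (n : WithBot ℕ) := fdeg_le_iff.2 fun b => by
        have := key b
        generalize pdeg k Q (starM e m b) + (μ₀ b : WithBot ℕ) = y at this
        induction y using WithBot.recBotCoe with
        | bot => simp
        | coe a =>
          rw [wb_cast, wb_cast] at this
          rw [wb_cast]
          have h : a + 1 ≤ n + 1 := by exact_mod_cast this
          have h : a ≤ n := by omega
          exact_mod_cast h
      exact add_le_add_left this 1

theorem lt_of_add_one_le {a b : WithBot ℕ} {n : ℕ} (h : a + 1 ≤ b) (hb : b < ((n + 1 : ℕ) : WithBot ℕ)) :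
    a < (n : WithBot ℕ) := by
  induction a using WithBot.recBotCoe with
  | bot => exact WithBot.bot_lt_coe _
  | coe a =>
    rw [wb_cast] at *
    have h := h.trans_lt hb
    have h : a + 1 < n + 1 := by exact_mod_cast h
    have h : a < n := by omega
    exact_mod_cast h

theorem le_of_add_one_le {a b : WithBot ℕ} {n : ℕ} (h : a + 1 ≤ b) (hb : b ≤ ((n + 1 : ℕ) : WithBot ℕ)) :
    a ≤ (n : WithBot ℕ) := by
  induction a using WithBot.recBotCoe with
  | bot => exact bot_le
  | coe a =>
    rw [wb_cast] at *
    have h := h.trans hb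
    have h : a + 1 ≤ n + 1 := by exact_mod_cast h
    have h : a ≤ n := by omega
    exact_mod_cast h

theorem main_step {ℓ : ℕ} (v : Fin ℓ → Q.V) (m : Fin ℓ → B →₀ PathAlg k Q)
    (hm : ∀ i, PathAlg.p k Q (v i) • m i = m i)
    (hmono : ∀ i j : Fin ℓ, i ≤ j → fdeg μ₀ (m i) ≤ fdeg μ₀ (m j))
    (i : Fin ℓ) (d : ℕ) (hd : fdeg μ₀ (m i) = d) (s : ℕ) :
    ∀ r : Fin ℓ → PathAlg k Q, (∀ j, r j * PathAlg.p k Q (v j) = r j) →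
      fdeg μ₀ (∑ j, r j • m j) < ((s + d : ℕ) : WithBot ℕ) →
      pdeg k Q (r i) = s →
      (∀ j, j < i → pdeg k Q (r j) + fdeg μ₀ (m j) ≤ ((s + d : ℕ) : WithBot ℕ)) →
      (∀ j, i < j → pdeg k Q (r j) + fdeg μ₀ (m j) < ((s + d : ℕ) : WithBot ℕ)) →
      ∃ t : Fin ℓ → PathAlg k Q, (∀ j, t j * PathAlg.p k Q (v j) = t j) ∧
        (∀ j, j < i → pdeg k Q (t j) + fdeg μ₀ (m j) ≤ (d : WithBot ℕ)) ∧
        fdeg μ₀ (m i - ∑ j ∈ Finset.univ.filter (· < i), t j • m j) < (d : WithBot ℕ) := by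
  induction s with
  | zero =>
    intro r hr hsum hri hlt hgt
    rw [zero_add] at *
    set c := chi (v i) (r i) with hc
    have hri' : r i = c • PathAlg.p k Q (v i) := by
      have hs : ∀ e, star e (r i) = 0 := by
        intro e
        have h := star_deg e (r i)
        rw [hri] at h
        rw [← pdeg_eq_bot]
        generalize pdeg k Q (star e (r i)) = z at h
        induction z using WithBot.recBotCoe with
        | bot => rfl
        | coe a => exfalso; norm_cast at h
      have h1 := decomp (r i)
      simp only [hs, mul_zero, Finset.sum_const_zero, add_zero] at h1
      rw [← hr i]
      conv_lhs => rw [h1]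
      rw [Finset.sum_mul, Finset.sum_eq_single (v i)]
      · rw [smul_mul_assoc, PathAlg.p_mul_self]
      · intro w _ hw
        rw [smul_mul_assoc, PathAlg.p_mul_ne k Q _ _ hw, smul_zero]
      · simp
    have hc0 : c ≠ 0 := by
      intro h
      rw [h, zero_smul] at hri'
      rw [hri', pdeg_zero] at hri
      simp at hri
    refine ⟨fun j => (-c⁻¹) • r j, fun j => by rw [smul_mul_assoc, hr], fun j hj => ?_, ?_⟩
    · exact (add_le_add_left (pdeg_smul_le _ _) _).trans (hlt j hj)
    · have hsplit : ∑ j, r j • m j = c • m i + ∑ j ∈ Finset.univ.filter (· < i), r j • m j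
          + ∑ j ∈ Finset.univ.filter (i < ·), r j • m j := by
        have h1 : r i • m i = c • m i := by rw [hri', smul_assoc, hm]
        rw [← h1]
        have : (Finset.univ : Finset (Fin ℓ)) =
            insert i (Finset.univ.filter (· < i) ∪ Finset.univ.filter (i < ·)) := by
          ext j; simp; grind
        conv_lhs => rw [this]
        rw [Finset.sum_insert (by simp), Finset.sum_union, add_assoc]
        rw [Finset.disjoint_left]; intro j; simp; intro h; exact h.le
      have : m i - ∑ j ∈ Finset.univ.filter (· < i), ((-c⁻¹) • r j) • m j =
          c⁻¹ • (∑ j, r j • m j - ∑ j ∈ Finset.univ.filter (i < ·), r j • m j) := by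
        rw [hsplit, add_sub_cancel_right, smul_add, smul_smul, inv_mul_cancel₀ hc0, one_smul]
        simp only [smul_assoc, ← Finset.smul_sum]
        rw [neg_smul, sub_neg_eq_add]
      rw [this]
      refine (fdeg_ksmul_le _ _).trans_lt (fdeg_sub_lt hsum ?_)
      refine fdeg_sum_lt _ _ (WithBot.bot_lt_coe _) fun j hj => ?_
      exact (fdeg_smul_le _ _).trans_lt (hgt j (by simpa using hj))
  | succ s ih =>
    intro r hr hsum hri hlt hgt
    obtain ⟨e, he⟩ : ∃ e, pdeg k Q (star e (r i)) = s := by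
      by_contra! hne
      have : pdeg k Q (r i) ≤ (s : WithBot ℕ) := pdeg_le_of_star fun e =>
        lt_of_le_of_ne (le_of_add_one_le (star_deg e (r i)) hri.le) (hne e)
      rw [hri] at this
      norm_cast at this
      omega
    have hs : s + 1 + d = s + d + 1 := by omega
    simp only [hs] at hsum hlt hgt
    have hstep : ∀ j, pdeg k Q (star e (r j)) + fdeg μ₀ (m j) + 1 ≤
        pdeg k Q (r j) + fdeg μ₀ (m j) := fun j => by
      rw [add_right_comm]; exact add_le_add_left (star_deg e (r j)) _
    refine ih (fun j => star e (r j)) ?_ ?_ he ?_ ?_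
    · intro j
      have := star_mul e (r j) (PathAlg.p k Q (v j))
      rw [star_p, smul_zero, add_zero, hr] at this
      exact this.symm
    · have h1 : ∑ j, star e (r j) • m j =
          starM e (∑ j, r j • m j) - ∑ j, chi (Q.src e) (r j) • starM e (m j) := by
        rw [map_sum, ← Finset.sum_sub_distrib]
        refine Finset.sum_congr rfl fun j _ => ?_
        rw [starM_smul]; abel
      rw [h1]
      refine fdeg_sub_lt (lt_of_add_one_le (starM_deg e _) hsum) ?_
      refine fdeg_sum_lt _ _ (WithBot.bot_lt_coe _) fun j _ => ?_
      by_cases hrj : r j = 0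
      · rw [hrj, map_zero, zero_smul, fdeg_zero]; exact WithBot.bot_lt_coe _
      refine (fdeg_ksmul_le _ _).trans_lt (lt_of_add_one_le (starM_deg e _) ?_)
      rcases le_or_gt j i with hj | hj
      · refine (hmono j i hj).trans_lt ?_
        rw [hd, Nat.cast_lt]; omega
      · refine lt_of_le_of_lt ?_ (hgt j hj)
        have : (0 : WithBot ℕ) ≤ pdeg k Q (r j) := by
          rw [pdeg, if_neg hrj]; exact_mod_cast Nat.zero_le _
        simpa using add_le_add_left this (fdeg μ₀ (m j))
    · intro j hj; exact le_of_add_one_le (hstep j) (hlt j hj)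
    · intro j hj; exact lt_of_add_one_le (hstep j) (hgt j hj)

end helpers

end LPA

open LPA in
/-- Let `M` be a free left `P_k(E)`-module freely generated by `B` (realized as
`B →₀ P_k(E)`), and let `μ₀ : B → ℕ`.  Extend `μ₀` to `M` as the formal degree
`μ (∑ r_b · b) = max_b (ν (r_b) + μ₀ b)`, where `ν` is the path-length degree.  Then `(M, μ)`
is a filtered `P_k(E)`-module and satisfies the weak algorithm relative to `μ` and the set of
vertices `P = {p_1, …, p_d}`. -/
theorem statement_2 (k : Type) [Field k] (Q : FinQuiver) (B : Type) (μ₀ : B → ℕ)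
    (μ : (B →₀ PathAlg k Q) → WithBot ℕ)
    (hμ : ∀ m : B →₀ PathAlg k Q,
      μ m = m.support.sup fun b => pdeg k Q (m b) + (μ₀ b : WithBot ℕ)) :
    IsModuleFiltration (pdeg k Q) μ ∧ WeakAlgorithm (pdeg k Q) (vertexFinset k Q) μ := by
  obtain rfl : μ = fdeg μ₀ := funext hμ
  clear hμ
  refine ⟨⟨fdeg_zero, ?_, fdeg_sub_le, fdeg_smul_le⟩, ?_⟩
  · intro m hm
    obtain ⟨b, hb⟩ : ∃ b, m b ≠ 0 := by
      by_contra! h; exact hm (Finsupp.ext h)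
    refine le_trans ?_ (le_fdeg m b)
    rw [pdeg, if_neg hb]
    exact_mod_cast Nat.zero_le _
  · intro ℓ n m hn hm hmono hdep
    have hv : ∀ i, ∃ v, PathAlg.p k Q v = n i := by
      intro i
      have := hn i
      simpa [vertexFinset] using this
    choose v hv using hv
    obtain rfl : n = fun i => PathAlg.p k Q (v i) := funext fun i => (hv i).symm
    rcases hdep with ⟨i, hi⟩ | ⟨r, hr, hsum⟩
    · exact ⟨i, Or.inl hi⟩
    rw [Finsupp.sum_fintype _ _ (by simp)] at hsum
    set D := r.support.sup fun i => pdeg k Q (r i) + fdeg μ₀ (m i) with hD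
    have hle : ∀ j, pdeg k Q (r j) + fdeg μ₀ (m j) ≤ D := by
      intro j
      by_cases hj : r j = 0
      · simp [hj, pdeg_zero]
      · exact Finset.le_sup (f := fun i => pdeg k Q (r i) + fdeg μ₀ (m i)) (by simpa using hj)
    have hDbot : D ≠ ⊥ := (bot_le.trans_lt hsum).ne'
    let S := Finset.univ.filter fun j => pdeg k Q (r j) + fdeg μ₀ (m j) = D
    have hS : S.Nonempty := by
      have hne : r.support.Nonempty := by
        by_contra h
        rw [Finset.not_nonempty_iff_eq_empty] at h
        rw [h] at hD
        exact hDbot (by simpa using hD)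
      obtain ⟨j, _, hj⟩ := Finset.exists_mem_eq_sup r.support hne
        (fun i => pdeg k Q (r i) + fdeg μ₀ (m i))
      exact ⟨j, by simp [S]; exact hj.symm⟩
    let i := S.max' hS
    have hi : pdeg k Q (r i) + fdeg μ₀ (m i) = D := by
      have := S.max'_mem hS
      simpa [S] using this
    have hgt : ∀ j, i < j → pdeg k Q (r j) + fdeg μ₀ (m j) < D := by
      intro j hj
      refine lt_of_le_of_ne (hle j) fun h => ?_
      have : j ≤ i := S.le_max' j (by simp [S, h])
      exact absurd hj (not_lt.2 this)
    have h1 : pdeg k Q (r i) ≠ ⊥ := by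
      intro h; rw [h, WithBot.bot_add] at hi; exact hDbot hi.symm
    have h2 : fdeg μ₀ (m i) ≠ ⊥ := by
      intro h; rw [h, WithBot.add_bot] at hi; exact hDbot hi.symm
    obtain ⟨s, hs⟩ := WithBot.ne_bot_iff_exists.1 h1
    obtain ⟨d, hd⟩ := WithBot.ne_bot_iff_exists.1 h2
    have hDe : D = ((s + d : ℕ) : WithBot ℕ) := by
      rw [← hi, ← hs, ← hd]; rfl
    rw [hDe] at hsum hgt hle
    obtain ⟨t, ht1, ht2, ht3⟩ := main_step v m hm hmono i d hd.symm s r hr hsum hs.symm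
      (fun j _ => hle j) hgt
    refine ⟨i, Or.inr ⟨Finsupp.equivFunOnFinite.symm fun j => t j.1, ?_, ?_, ?_⟩⟩
    · intro j; exact ht1 j.1
    · rw [Finsupp.sum_fintype _ _ (by simp), ← hd]
      rw [Finset.sum_subtype (p := fun j => j < i) _ (by simp)] at ht3
      exact ht3
    · intro j
      rw [← hd]
      exact ht2 j.1 j.2
end

section
/- Let (R,ν) be a filtered ring with a set of vertices P. If R satisfies the weak algorithm relative to ν and P, then the subring R_0 = {r ∈ R : ν(r) ≤ 0} is a semisimple ring; indeed R_0 = ⊕_{p∈P} R_0 p is a decomposition into simple left ideals. -/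
open LPA in
/-- Key step: a nonzero element `x = x * p` of degree `≤ 0` has a left multiple `y * x = p`
with `y` of degree `≤ 0`. -/
theorem key_step {R : Type} [Ring R]
    (ν : R → WithBot ℕ) (P : Finset R)
    (hν : IsRingFiltration ν) (hP : IsVertexSet ν P)
    (hWA : WeakAlgorithm ν P ν) (p : R) (hp : p ∈ P) (x : R) (hx : x ≠ 0)
    (hxp : x * p = x) (hx0 : ν x ≤ 0) : ∃ y : R, ν y ≤ 0 ∧ y * x = p := by
  have hq : ∃ q ∈ P, q * x ≠ 0 := by
    by_contra! h
    apply hx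
    rw [← one_mul x, ← hP.sum_eq_one, Finset.sum_mul]
    exact Finset.sum_eq_zero h
  obtain ⟨q, hq, ha⟩ := hq
  have hneg : ∀ z : R, ν z < 0 → z = 0 := fun z hz => by
    by_contra h
    exact absurd (hν.nonneg z h) (not_le.mpr hz)
  have ha0 : ν (q * x) = 0 := by
    apply le_antisymm _ (hν.nonneg _ ha)
    calc ν (q * x) ≤ ν q + ν x := hν.mul_le _ _
      _ ≤ 0 + 0 := add_le_add (hP.deg_eq_zero q hq).le hx0
      _ = 0 := by simp
  have hq0 : q ≠ 0 := by
    rintro rfl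
    simp at ha
  obtain ⟨i, hi⟩ := hWA 2 ![q, p] ![q * x, p]
    (by intro i; fin_cases i <;> simp [hq, hp])
    (by intro i; fin_cases i <;> simp [← mul_assoc, hP.idem _ hq, hP.idem _ hp])
    (by
      have : ∀ i : Fin 2, ν ((![q * x, p] : Fin 2 → R) i) = 0 := by
        intro i; fin_cases i <;> simp [ha0, hP.deg_eq_zero p hp]
      intro i j _; rw [this, this])
    (by
      right
      refine ⟨Finsupp.equivFunOnFinite.symm ![q, -(q * x)], ?_, ?_⟩
      · intro i; fin_cases i <;> simp [hP.idem _ hq, mul_assoc, hxp]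
      · rw [Finsupp.sum_fintype _ _ (by simp)]
        have h1 : ∑ i : Fin 2, (Finsupp.equivFunOnFinite.symm ![q, -(q * x)]) i •
            (![q * x, p] : Fin 2 → R) i = 0 := by
          simp [Fin.sum_univ_two, ← mul_assoc, hP.idem _ hq]
          simp [mul_assoc, hxp]
        rw [h1, hν.map_zero]
        refine lt_of_lt_of_le (b := (0 : WithBot ℕ)) (WithBot.bot_lt_coe 0) ?_
        refine le_trans ?_ (Finset.le_sup (b := (0 : Fin 2)) (by simp [hq0]))
        simp [ha0, hP.deg_eq_zero q hq])
  fin_cases i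
  · exfalso
    rcases hi with h | ⟨r, -, h, -⟩
    · exact ha h
    · have : r = 0 := by
        ext j
        exact absurd j.2 (by simp)
      subst this
      simp at h
  · rcases hi with h | ⟨r, -, h, h'⟩
    · have := hP.deg_eq_zero p hp
      simp at h
      rw [h, hν.map_zero] at this
      exact absurd this (by simp)
    · let j : {j : Fin 2 // j < 1} := ⟨0, by simp⟩
      have hu : ∀ k : {j : Fin 2 // j < 1}, k = j := by
        rintro ⟨k, hk⟩
        apply Subtype.ext
        change k = 0
        omega
      have hs : (r.sum fun i ri => ri • (![q * x, p] : Fin 2 → R) i.1) = r j * (q * x) := by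
        rw [Finsupp.sum_fintype _ _ (by simp)]
        exact Finset.sum_eq_single j (fun k _ hk => absurd (hu k) hk)
          (fun h => absurd (Finset.mem_univ _) h)
      have h2 : ν (p - r j * (q * x)) < ν p := by
        rw [← hs]; exact h
      rw [hP.deg_eq_zero p hp] at h2
      have h3 := h' j
      have h4 : ν (r j) + ν (q * x) ≤ ν p := h3
      rw [ha0, hP.deg_eq_zero p hp, add_zero] at h4
      refine ⟨r j * q, ?_, ?_⟩
      · calc ν (r j * q) ≤ ν (r j) + ν q := hν.mul_le _ _
          _ ≤ 0 + 0 := add_le_add h4 (hP.deg_eq_zero q hq).le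
          _ = 0 := by simp
      · rw [mul_assoc]
        exact (sub_eq_zero.mp (hneg _ h2)).symm

open LPA in
/-- If `(R, ν)` is a filtered ring with a set of vertices `P` satisfying the weak
algorithm (relative to `ν`, viewing `R` as a filtered module over itself, and `P`), then the
subring `R₀ = {r | ν r ≤ 0}` is semisimple; indeed `R₀ = ⊕_{p ∈ P} R₀·p` is a decomposition
into simple left ideals. -/
theorem statement_4 {R : Type} [Ring R] [DecidableEq R]
    (ν : R → WithBot ℕ) (P : Finset R)
    (hν : IsRingFiltration ν) (hP : IsVertexSet ν P)
    (hWA : WeakAlgorithm ν P ν)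
    (R0 : Subring R) (hR0 : ∀ r : R, r ∈ R0 ↔ ν r ≤ 0) :
    IsSemisimpleRing ↥R0 ∧
      ∀ f : {p : R // p ∈ P} → Submodule ↥R0 ↥R0,
        (∀ p : {p : R // p ∈ P},
          f p = Submodule.span ↥R0
            {(⟨p.1, (hR0 p.1).mpr (le_of_eq (hP.deg_eq_zero p.1 p.2))⟩ : ↥R0)}) →
        DirectSum.IsInternal f ∧ ∀ p, IsSimpleModule ↥R0 ↥(f p) := by
  have main : ∀ f : {p : R // p ∈ P} → Submodule ↥R0 ↥R0,
        (∀ p : {p : R // p ∈ P},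
          f p = Submodule.span ↥R0
            {(⟨p.1, (hR0 p.1).mpr (le_of_eq (hP.deg_eq_zero p.1 p.2))⟩ : ↥R0)}) →
        DirectSum.IsInternal f ∧ ∀ p, IsSimpleModule ↥R0 ↥(f p) := by
    intro f hf
    let e : {p : R // p ∈ P} → R0 := fun p =>
      ⟨p.1, (hR0 p.1).mpr (le_of_eq (hP.deg_eq_zero p.1 p.2))⟩
    have hfe : ∀ p (x : R0), x ∈ f p ↔ ∃ c : R0, c * e p = x := by
      intro p x
      rw [hf p, Submodule.mem_span_singleton]
      rfl
    have hee : ∀ p, e p * e p = e p := fun p => Subtype.ext (hP.idem p.1 p.2)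
    have heo : ∀ p q, p ≠ q → e p * e q = 0 := fun p q h =>
      Subtype.ext (hP.orthogonal p.1 p.2 q.1 q.2 (fun h' => h (Subtype.ext h')))
    have hes : ∑ p, e p = 1 := by
      apply Subtype.ext
      have h1 : ((∑ p, e p : R0) : R) = ∑ p : {p : R // p ∈ P}, p.1 := by
        rw [AddSubmonoidClass.coe_finsetSum]
      rw [h1, Finset.sum_coe_sort P (fun p => p), hP.sum_eq_one]
      rfl
    refine ⟨?_, ?_⟩
    · rw [DirectSum.isInternal_submodule_iff_iSupIndep_and_iSup_eq_top]
      constructor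
      · intro p
        have hle : (⨆ q, ⨆ (_ : q ≠ p), f q) ≤
            LinearMap.ker (LinearMap.toSpanSingleton R0 R0 (e p)) := by
          refine iSup_le fun q => iSup_le fun hqp => ?_
          intro x hx
          obtain ⟨c, rfl⟩ := (hfe q x).mp hx
          simp [mul_assoc, heo q p hqp]
        rw [Submodule.disjoint_def]
        intro x hx hx'
        obtain ⟨c, rfl⟩ := (hfe p x).mp hx
        have := hle hx'
        simpa [mul_assoc, hee p] using this
      · rw [eq_top_iff]
        intro x _
        rw [← mul_one x, ← hes, Finset.mul_sum]
        exact Submodule.sum_mem _ fun p _ =>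
          Submodule.mem_iSup_of_mem p ((hfe p _).mpr ⟨x, rfl⟩)
    · intro p
      rw [isSimpleModule_iff_toSpanSingleton_surjective]
      constructor
      · refine ⟨⟨⟨e p, (hfe p _).mpr ⟨1, one_mul _⟩⟩, 0, fun h => ?_⟩⟩
        have h1 : p.1 = 0 := congrArg (fun z : f p => ((z : R0) : R)) h
        have h2 := hP.deg_eq_zero p.1 p.2
        rw [h1, hν.map_zero] at h2
        exact absurd h2 (by simp)
      · rintro ⟨x, hx⟩ hx0 ⟨y, hy⟩
        obtain ⟨c, hc⟩ := (hfe p x).mp hx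
        obtain ⟨d, hd⟩ := (hfe p y).mp hy
        have hxp : x * e p = x := by rw [← hc, mul_assoc, hee]
        obtain ⟨z, hz, hzx⟩ := key_step ν P hν hP hWA p.1 p.2 (x : R)
          (fun h => hx0 (Subtype.ext (Subtype.ext h)))
          (congrArg Subtype.val hxp) ((hR0 _).mp x.2)
        refine ⟨d * ⟨z, (hR0 z).mpr hz⟩, ?_⟩
        apply Subtype.ext
        change d * ⟨z, (hR0 z).mpr hz⟩ * x = y
        rw [mul_assoc, ← hd]
        congr 1
        exact Subtype.ext hzx
  refine ⟨?_, main⟩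
  obtain ⟨h1, h2⟩ := main _ (fun p => rfl)
  have h3 := h1.submodule_iSup_eq_top
  exact isSemisimpleModule_of_isSemisimpleModule_submodule' (fun p => inferInstance) h3
end
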